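/- Let (S,T) be a Cuntz-type representation of F_θ^+ on H (m ≥ 2 or n ≥ 2). If for every pair of integers k,l > 0 the row-isometry [S_uT_v : |u|=k, |v|=l] is of dilation type, then the structure projections satisfy P_{k,l} = P_{p,q} for all k,l,p,q > 0; in particular this common projection equals the first structure projection P = ⋀_{k,l>0} P_{k,l} of the nonself-adjoint 2-graph algebra 𝔖. -/

import Mathlib

noncomputable section

open scoped InnerProductSpace ComplexInnerProductSpace Classical

section GeneralDefs

variable {E : Type*} [NormedAddCommGroup E] [InnerProductSpace ℂ E]

/-- The operator associated to a word: `wordOp V [a₁, …, a_r] = V a₁ * ⋯ * V a_r`. -/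
def wordOp {ι : Type*} (V : ι → E →L[ℂ] E) (w : List ι) : E →L[ℂ] E :=
  (w.map V).prod

/-- The operator associated to a word of fixed length `k` given as a function `Fin k → ι`. -/
def fnWordOp {ι : Type*} {k : ℕ} (V : ι → E →L[ℂ] E) (u : Fin k → ι) : E →L[ℂ] E :=
  wordOp V (List.ofFn u)

/-- The closure of a set of operators in the weak operator topology, described via
basic WOT-neighbourhoods (finitely many vector functionals). -/
def wotClosure (S : Set (E →L[ℂ] E)) : Set (E →L[ℂ] E) :=
  {A | ∀ ε > (0 : ℝ), ∀ F : Finset (E × E), ∃ B ∈ S, ∀ p ∈ F, ‖⟪p.1, (A - B) p.2⟫‖ < ε}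

/-- The unital WOT-closed algebra generated by a set of operators. -/
def genWotAlg (G : Set (E →L[ℂ] E)) : Set (E →L[ℂ] E) :=
  wotClosure ((Algebra.adjoin ℂ G : Subalgebra ℂ (E →L[ℂ] E)) : Set (E →L[ℂ] E))

/-- A wandering vector for a row-isometry `V = [V_a : a ∈ ι]`: a unit vector whose orbit
under all words in the `V_a` is an orthonormal family. -/
def IsWandering {ι : Type*} (V : ι → E →L[ℂ] E) (ζ : E) : Prop :=
  ‖ζ‖ = 1 ∧ ∀ w w' : List ι,
    ⟪wordOp V w ζ, wordOp V w' ζ⟫ = if w = w' then 1 else 0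

/-- Restriction of an operator to an invariant subspace (junk value `0` if not invariant). -/
def restrictCLM (A : E →L[ℂ] E) (M : Submodule ℂ E) : M →L[ℂ] M :=
  if h : ∀ x ∈ M, A x ∈ M then
    { toFun := fun x => ⟨A x, h x x.2⟩
      map_add' := by intro x y; ext; simp
      map_smul' := by intro c x; ext; simp
      cont := Continuous.subtype_mk (A.continuous.comp continuous_subtype_val) _ }
  else 0

/-- The unital WOT-closed algebra on `M` generated by the restrictions of the `V a` to `M`. -/
def rowAlgOn {ι : Type*} (V : ι → E →L[ℂ] E) (M : Submodule ℂ E) : Set (M →L[ℂ] M) :=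
  genWotAlg (Set.range fun a => restrictCLM (V a) M)

/-- The unital WOT-closed algebra on `M` generated by the restrictions of the `V a`
is self-adjoint. -/
def restrictedAlgSelfAdjoint {ι : Type*} (V : ι → E →L[ℂ] E) (M : Submodule ℂ E) : Prop :=
  ∀ A ∈ rowAlgOn V M, ∃ B ∈ rowAlgOn V M,
    ∀ x y : M, ⟪((A x : M) : E), (y : E)⟫ = ⟪(x : E), ((B y : M) : E)⟫

variable [CompleteSpace E]

/-- A row-isometry is of dilation type if it is defect free and has no nonzero reducing
subspace on which it is either absolutely continuous (spanned by wandering vectors) or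
singular (generating a self-adjoint WOT-closed algebra). -/
def IsDilationType {ι : Type*} [Fintype ι] (V : ι → E →L[ℂ] E) : Prop :=
  (∑ a, V a * star (V a)) = 1 ∧
    ¬ ∃ M : Submodule ℂ E, M ≠ ⊥ ∧ IsClosed (M : Set E) ∧
      (∀ a, ∀ x ∈ M, V a x ∈ M) ∧ (∀ a, ∀ x ∈ M, star (V a) x ∈ M) ∧
      ((M = (Submodule.span ℂ {ζ : E | ζ ∈ M ∧ IsWandering V ζ}).topologicalClosure) ∨
        restrictedAlgSelfAdjoint V M)

end GeneralDefs

/-- An isometric representation of the single-vertex 2-graph `F_θ⁺` on a Hilbert space `H`. -/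
structure TwoGraphRep (m n : ℕ) (θ : Equiv.Perm (Fin m × Fin n)) (H : Type*)
    [NormedAddCommGroup H] [InnerProductSpace ℂ H] [CompleteSpace H] where
  S : Fin m → H →L[ℂ] H
  T : Fin n → H →L[ℂ] H
  isometS : ∀ i i', star (S i) * S i' = if i = i' then 1 else 0
  isometT : ∀ j j', star (T j) * T j' = if j = j' then 1 else 0
  comm : ∀ i j, S i * T j = T (θ (i, j)).2 * S (θ (i, j)).1

namespace TwoGraphRep

variable {m n : ℕ} {θ : Equiv.Perm (Fin m × Fin n)} {H : Type*}
  [NormedAddCommGroup H] [InnerProductSpace ℂ H] [CompleteSpace H]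

/-- A representation is of Cuntz type if both row-isometries are defect free. -/
def CuntzType (ρ : TwoGraphRep m n θ H) : Prop :=
  (∑ i, ρ.S i * star (ρ.S i)) = 1 ∧ (∑ j, ρ.T j * star (ρ.T j)) = 1

/-- The nonself-adjoint 2-graph algebra `𝔖`: the unital WOT-closed algebra generated by
the `S_i` and `T_j`. -/
def alg (ρ : TwoGraphRep m n θ H) : Set (H →L[ℂ] H) :=
  genWotAlg (Set.range ρ.S ∪ Set.range ρ.T)

/-- The von Neumann algebra generated by the `S_i` and `T_j`: the WOT-closure of the
unital *-algebra they generate. -/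
def vnAlg (ρ : TwoGraphRep m n θ H) : Set (H →L[ℂ] H) :=
  genWotAlg ((Set.range ρ.S ∪ Set.range ρ.T) ∪ star '' (Set.range ρ.S ∪ Set.range ρ.T))

/-- Wandering vector for the row-isometry `[S_u T_v : |u| = k, |v| = l]`. -/
def IsWanderingKL (ρ : TwoGraphRep m n θ H) (k l : ℕ) (ζ : H) : Prop :=
  ‖ζ‖ = 1 ∧ ∀ (p p' : ℕ) (u u' : List (Fin m)) (v v' : List (Fin n)),
    u.length = p * k → v.length = p * l → u'.length = p' * k → v'.length = p' * l →
    ⟪(wordOp ρ.S u * wordOp ρ.T v) ζ, (wordOp ρ.S u' * wordOp ρ.T v') ζ⟫ =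
      if u = u' ∧ v = v' then 1 else 0

/-- The range of the structure projection `P_{k,l}`: the orthogonal complement of the
closed linear span of the wandering vectors of `[S_u T_v : |u| = k, |v| = l]`. -/
def structSpaceKL (ρ : TwoGraphRep m n θ H) (k l : ℕ) : Submodule ℂ H :=
  ((Submodule.span ℂ {ζ : H | ρ.IsWanderingKL k l ζ}).topologicalClosure)ᗮ

/-- The range of the first structure projection `P = ⋀_{k,l>0} P_{k,l}`. -/
def firstStructSpace (ρ : TwoGraphRep m n θ H) : Submodule ℂ H :=
  ⨅ (k : ℕ) (l : ℕ) (_ : 0 < k) (_ : 0 < l), ρ.structSpaceKL k l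

/-- The row-isometry `[S_u T_v : |u| = k, |v| = l]`. -/
def rowKL (ρ : TwoGraphRep m n θ H) (k l : ℕ) :
    ((Fin k → Fin m) × (Fin l → Fin n)) → H →L[ℂ] H :=
  fun p => fnWordOp ρ.S p.1 * fnWordOp ρ.T p.2

/-- A wandering vector for the representation `(S,T)`. -/
def IsWanderingRep (ρ : TwoGraphRep m n θ H) (ζ : H) : Prop :=
  ‖ζ‖ = 1 ∧ ∀ (u u' : List (Fin m)) (v v' : List (Fin n)),
    ⟪(wordOp ρ.S u * wordOp ρ.T v) ζ, (wordOp ρ.S u' * wordOp ρ.T v') ζ⟫ =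
      if u = u' ∧ v = v' then 1 else 0

/-- The representation is irreducible: the only closed subspaces invariant under all
`S_i, T_j, S_i*, T_j*` are `⊥` and `⊤`. -/
def Irreducible (ρ : TwoGraphRep m n θ H) : Prop :=
  ∀ M : Submodule ℂ H, IsClosed (M : Set H) →
    (∀ i, ∀ x ∈ M, ρ.S i x ∈ M) → (∀ i, ∀ x ∈ M, star (ρ.S i) x ∈ M) →
    (∀ j, ∀ x ∈ M, ρ.T j x ∈ M) → (∀ j, ∀ x ∈ M, star (ρ.T j) x ∈ M) →
    M = ⊥ ∨ M = ⊤

/-- The representation is atomic with standard basis `ξ`: every generator maps each basis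
vector to a unimodular multiple of a basis vector. -/
def AtomicBasis {Λ : Type*} (ρ : TwoGraphRep m n θ H) (ξ : HilbertBasis Λ ℂ H) : Prop :=
  (∀ i t, ∃ (c : ℂ) (t' : Λ), ‖c‖ = 1 ∧ ρ.S i (ξ t) = c • ξ t') ∧
  (∀ j t, ∃ (c : ℂ) (t' : Λ), ‖c‖ = 1 ∧ ρ.T j (ξ t) = c • ξ t')

/-- `x` has a blue ring: `S_u x ∈ 𝕋x` for some nonempty word `u`. -/
def HasBlueRing (ρ : TwoGraphRep m n θ H) (x : H) : Prop :=
  ∃ u : List (Fin m), u ≠ [] ∧ ∃ c : ℂ, ‖c‖ = 1 ∧ wordOp ρ.S u x = c • x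

/-- `x` has a red ring: `T_v x ∈ 𝕋x` for some nonempty word `v`. -/
def HasRedRing (ρ : TwoGraphRep m n θ H) (x : H) : Prop :=
  ∃ v : List (Fin n), v ≠ [] ∧ ∃ c : ℂ, ‖c‖ = 1 ∧ wordOp ρ.T v x = c • x

/-- `x` has a mixed ring: `T_v S_u x ∈ 𝕋x` for some nonempty words `u`, `v`. -/
def HasMixedRing (ρ : TwoGraphRep m n θ H) (x : H) : Prop :=
  ∃ (u : List (Fin m)) (v : List (Fin n)), u ≠ [] ∧ v ≠ [] ∧
    ∃ c : ℂ, ‖c‖ = 1 ∧ wordOp ρ.T v (wordOp ρ.S u x) = c • x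

end TwoGraphRep

/-!
For a row-isometry `V` let `R_V` be the closed linear span of its wandering vectors. Everything
rests on the Wold decomposition of a closed `V`-invariant subspace `M`: the vectors of `M`
orthogonal to all wandering vectors in `M` lie in the closed linear span of the `V_a M`, hence form
a subspace invariant under the `V_a*`.

Suppose that `V` is defect free and that `η` is wandering. If the orbit map `c ↦ ∑ c_w V_w x` is
contractive on `ℓ²`, then the orbit of `η + x / 2` is a Riesz sequence. The tails of such an orbit
have zero intersection, so by the Wold decomposition `η + x / 2 ∈ R_V`, and therefore `x ∈ R_V`.
If, on the contrary, no nonzero vector of a reducing subspace has a contractive orbit, then no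
finite ampliation has a wandering vector there, so all invariant subspaces of the ampliations are
coinvariant. Applied to cyclic subspaces, this shows that the weakly closed algebra on the reducing
subspace is self-adjoint. Consequently, for `V` of dilation type, a reducing subspace of `R_V`
contains no wandering vector, and if `V` has a wandering vector at all, a reducing subspace that
meets `R_V` only in `0` is zero.

Now let `V` and `W` be the row-isometries of degrees `(k, l)` and `(p, q)`. Every `S_u T_v` maps
`W`-wandering vectors to `W`-wandering vectors, and factoring an `S_i` or a `T_j` out of each `V_a`
upgrades the Wold decomposition from the `V_a*` to the `S_i*` and `T_j*`. The largest coinvariant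
subspace `K` of `R_W` is reducing, so it contains no `W`-wandering vector; by Wold for `W`, the
invariant subspace `K ∩ R_V` is then reducing as well, and its complement in `K` vanishes because it
meets `R_V` only in `0`. Hence `K ⊆ R_V`. By Wold for `V`, the space `R_W` is spanned by
`V`-wandering vectors and a coinvariant subspace, so `R_W ⊆ R_V`, and equality follows by symmetry.
If `V` has no wandering vector, then `R_W` itself is coinvariant, so `W` has no wandering vector
either.
-/

section RowOperators

variable {ι κ E : Type*} [NormedAddCommGroup E] [InnerProductSpace ℂ E] {V : ι → E →L[ℂ] E}
  {M N : Submodule ℂ E}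

@[simp] theorem wordOp_nil (V : ι → E →L[ℂ] E) : wordOp V [] = 1 := rfl

@[simp] theorem wordOp_cons (V : ι → E →L[ℂ] E) (a : ι) (w : List ι) :
    wordOp V (a :: w) = V a * wordOp V w := by
  simp [wordOp]

theorem wordOp_append (V : ι → E →L[ℂ] E) (w w' : List ι) :
    wordOp V (w ++ w') = wordOp V w * wordOp V w' := by
  simp [wordOp]

section Commutation

variable {X : ι → E →L[ℂ] E} {Y : κ → E →L[ℂ] E}

theorem exists_wordOp_mul_eq_mul_wordOp (h : ∀ a b, ∃ b' a', X a * Y b = Y b' * X a')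
    (u : List ι) (b : κ) :
    ∃ b' u', u'.length = u.length ∧ wordOp X u * Y b = Y b' * wordOp X u' := by
  induction u with
  | nil => exact ⟨b, [], rfl, by simp⟩
  | cons a u ih =>
    obtain ⟨b', u', hu, hb⟩ := ih
    obtain ⟨b'', a', ha⟩ := h a b'
    refine ⟨b'', a' :: u', by simp [hu], ?_⟩
    rw [wordOp_cons, wordOp_cons, mul_assoc, hb, ← mul_assoc, ha, mul_assoc]

theorem exists_wordOp_mul_wordOp (h : ∀ a b, ∃ b' a', X a * Y b = Y b' * X a')
    (u : List ι) (v : List κ) :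
    ∃ v' u', v'.length = v.length ∧ u'.length = u.length ∧
      wordOp X u * wordOp Y v = wordOp Y v' * wordOp X u' := by
  induction v generalizing u with
  | nil => exact ⟨[], u, rfl, rfl, by simp⟩
  | cons b v ih =>
    obtain ⟨b', u', hu, hb⟩ := exists_wordOp_mul_eq_mul_wordOp h u b
    obtain ⟨v', u'', hv, hu', hw⟩ := ih u'
    refine ⟨b' :: v', u'', by simp [hv], hu'.trans hu, ?_⟩
    rw [wordOp_cons, wordOp_cons, ← mul_assoc, hb, mul_assoc, hw, mul_assoc]

end Commutation

/-- `M` is invariant under every member of the family `V`. Coinvariance, that is, invariance under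
all the adjoints `(V a)*`, is expressed as `InvariantUnder (star V) M`. -/
def InvariantUnder (V : ι → E →L[ℂ] E) (M : Submodule ℂ E) : Prop :=
  ∀ a, ∀ x ∈ M, V a x ∈ M

namespace InvariantUnder

theorem top : InvariantUnder V ⊤ := fun _ _ _ ↦ Submodule.mem_top

theorem inf (hM : InvariantUnder V M) (hN : InvariantUnder V N) : InvariantUnder V (M ⊓ N) :=
  fun a x hx ↦ ⟨hM a x hx.1, hN a x hx.2⟩

theorem wordOp_apply_mem (hM : InvariantUnder V M) (w : List ι) {x : E} (hx : x ∈ M) :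
    wordOp V w x ∈ M := by
  induction w with
  | nil => simpa
  | cons a w ih => simpa using hM a _ ih

theorem adjoin_apply_mem (hM : InvariantUnder V M) {B : E →L[ℂ] E}
    (hB : B ∈ Algebra.adjoin ℂ (Set.range V)) {x : E} (hx : x ∈ M) : B x ∈ M := by
  induction hB using Algebra.adjoin_induction generalizing x with
  | mem _ hB =>
    obtain ⟨a, rfl⟩ := hB
    exact hM a x hx
  | algebraMap c => simpa [Algebra.algebraMap_eq_smul_one] using M.smul_mem c hx
  | add _ _ _ _ hB hC => exact M.add_mem (hB hx) (hC hx)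
  | mul _ _ _ _ hB hC => exact hB (hC hx)

end InvariantUnder

theorem coe_restrictCLM_apply {A : E →L[ℂ] E} (h : ∀ x ∈ M, A x ∈ M) (x : M) :
    (restrictCLM A M x : E) = A x := by
  rw [restrictCLM, dif_pos h]
  rfl

/-- The `ℓ²` norm of a finitely supported family of scalars. -/
def l2Norm (c : κ →₀ ℂ) : ℝ := √(c.sum fun _ z ↦ ‖z‖ ^ 2)

theorem l2Norm_le_l2Norm_sub {a b : κ →₀ ℂ} (hab : Disjoint a.support b.support) :
    l2Norm a ≤ l2Norm (a - b) := by
  have hb : ∀ i ∈ a.support, b i = 0 := fun i hi ↦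
    Finsupp.notMem_support_iff.1 (Finset.disjoint_left.1 hab hi)
  refine Real.sqrt_le_sqrt ?_
  calc ∑ i ∈ a.support, ‖a i‖ ^ 2
      = ∑ i ∈ a.support, ‖(a - b) i‖ ^ 2 := Finset.sum_congr rfl fun i hi ↦ by simp [hb i hi]
    _ ≤ ∑ i ∈ (a - b).support, ‖(a - b) i‖ ^ 2 :=
      Finset.sum_le_sum_of_subset_of_nonneg (fun i hi ↦ by simpa [hb i hi] using hi)
        fun _ _ _ ↦ by positivity

/-- The linear map sending a finitely supported family `c` of scalars indexed by words to
`∑ c_w V_w x`. -/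
def orbitMap (V : ι → E →L[ℂ] E) (x : E) : (List ι →₀ ℂ) →ₗ[ℂ] E :=
  Finsupp.linearCombination ℂ fun w ↦ wordOp V w x

theorem orbitMap_add_smul (V : ι → E →L[ℂ] E) (x y : E) (t : ℂ) (c : List ι →₀ ℂ) :
    orbitMap V (x + t • y) c = orbitMap V x c + t • orbitMap V y c := by
  simp [orbitMap, Finsupp.linearCombination_apply, Finsupp.smul_sum, smul_comm t]

theorem map_orbitMap {F : Type*} [NormedAddCommGroup F] [InnerProductSpace ℂ F]
    {W : ι → F →L[ℂ] F} (A : E →ₗ[ℂ] F) (hA : ∀ a x, A (V a x) = W a (A x)) (x : E)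
    (c : List ι →₀ ℂ) : A (orbitMap V x c) = orbitMap W (A x) c := by
  have hw (w : List ι) : A (wordOp V w x) = wordOp W w (A x) := by
    induction w with
    | nil => simp
    | cons a w ih => simp [hA, ih]
  simp only [orbitMap, Finsupp.apply_linearCombination, Function.comp_def, hw]

/-- The orbit map of `x` extends to a contraction on the full Fock space `ℓ²(List ι)`. -/
def HasContractiveOrbit (V : ι → E →L[ℂ] E) (x : E) : Prop :=
  ∀ c : List ι →₀ ℂ, ‖orbitMap V x c‖ ≤ l2Norm c

/-- The orbit of `x` is a Riesz sequence: the orbit map of `x` extends to an isomorphism of the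
full Fock space `ℓ²(List ι)` onto a closed subspace. -/
def HasRieszOrbit (V : ι → E →L[ℂ] E) (x : E) : Prop :=
  ∃ A B : ℝ, 0 < A ∧ 0 < B ∧
    ∀ c : List ι →₀ ℂ, A * l2Norm c ≤ ‖orbitMap V x c‖ ∧ ‖orbitMap V x c‖ ≤ B * l2Norm c

namespace IsWandering

variable {ζ : E}

theorem orthonormal (h : IsWandering V ζ) : Orthonormal ℂ fun w ↦ wordOp V w ζ :=
  orthonormal_iff_ite.2 h.2

theorem ne_zero (h : IsWandering V ζ) : ζ ≠ 0 := by
  rintro rfl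
  simpa using h.1

theorem apply (h : IsWandering V ζ) (a : ι) : IsWandering V (V a ζ) := by
  have hword (w : List ι) : wordOp V w (V a ζ) = wordOp V (w ++ [a]) ζ := by
    simp [wordOp_append]
  refine ⟨by simpa using h.orthonormal.1 [a], fun w w' ↦ ?_⟩
  simp [hword, h.2]

theorem norm_orbitMap (h : IsWandering V ζ) (c : List ι →₀ ℂ) :
    ‖orbitMap V ζ c‖ = l2Norm c := by
  rw [norm_eq_sqrt_re_inner (𝕜 := ℂ), orbitMap, h.orthonormal.inner_finsupp_eq_sum_left, l2Norm,
    Finsupp.sum, Finsupp.sum, map_sum]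
  simp only [RCLike.conj_mul, ← RCLike.ofReal_pow, RCLike.ofReal_re]

theorem hasContractiveOrbit (h : IsWandering V ζ) : HasContractiveOrbit V ζ :=
  fun c ↦ (h.norm_orbitMap c).le

theorem hasRieszOrbit_add_smul {x : E} (h : IsWandering V ζ) (hx : HasContractiveOrbit V x) :
    HasRieszOrbit V (ζ + (2⁻¹ : ℂ) • x) := by
  refine ⟨1 / 2, 3 / 2, by norm_num, by norm_num, fun c ↦ ?_⟩
  have hhalf : ‖(2⁻¹ : ℂ) • orbitMap V x c‖ ≤ 1 / 2 * l2Norm c := by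
    rw [norm_smul, norm_inv, Complex.norm_two, ← one_div]
    gcongr
    exact hx c
  have hupper := norm_add_le (orbitMap V ζ c) ((2⁻¹ : ℂ) • orbitMap V x c)
  have hlower := norm_sub_le_norm_add (orbitMap V ζ c) ((2⁻¹ : ℂ) • orbitMap V x c)
  rw [h.norm_orbitMap] at hupper hlower
  rw [orbitMap_add_smul]
  constructor <;> linarith

end IsWandering

/-- The closed linear span of the vectors `V_w x` with `|w| ≥ r`. -/
def orbitTail (V : ι → E →L[ℂ] E) (x : E) (r : ℕ) : Submodule ℂ E :=
  (Submodule.span ℂ ((wordOp V · x) '' {w | r ≤ w.length})).topologicalClosure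

section OrbitTail

variable {x : E} {r : ℕ}

theorem isClosed_orbitTail (V : ι → E →L[ℂ] E) (x : E) (r : ℕ) :
    IsClosed (orbitTail V x r : Set E) :=
  Submodule.isClosed_topologicalClosure _

theorem orbitTail_le (hN : IsClosed (N : Set E))
    (h : ∀ w : List ι, r ≤ w.length → wordOp V w x ∈ N) : orbitTail V x r ≤ N :=
  Submodule.topologicalClosure_minimal _ (Submodule.span_le.2 (Set.image_subset_iff.2 h)) hN

theorem wordOp_apply_mem_orbitTail {w : List ι} (hw : r ≤ w.length) :
    wordOp V w x ∈ orbitTail V x r :=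
  Submodule.le_topologicalClosure _ (Submodule.subset_span ⟨w, hw, rfl⟩)

theorem apply_mem_orbitTail_succ {z : E} (hz : z ∈ orbitTail V x r) (a : ι) :
    V a z ∈ orbitTail V x (r + 1) := by
  suffices h : orbitTail V x r ≤ (orbitTail V x (r + 1)).comap (V a).toLinearMap from h hz
  refine orbitTail_le ((isClosed_orbitTail V x _).preimage (V a).continuous) fun w hw ↦ ?_
  simpa using wordOp_apply_mem_orbitTail (V := V) (x := x) (w := a :: w) (by simpa using hw)

theorem invariantUnder_orbitTail_zero (V : ι → E →L[ℂ] E) (x : E) :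
    InvariantUnder V (orbitTail V x 0) := fun a _ hz ↦
  orbitTail_le (isClosed_orbitTail V x 0) (fun _ _ ↦ wordOp_apply_mem_orbitTail (Nat.zero_le _))
    (apply_mem_orbitTail_succ hz a)

theorem exists_norm_sub_orbitMap_lt {z : E} (hz : z ∈ orbitTail V x r) {ε : ℝ} (hε : 0 < ε) :
    ∃ c : List ι →₀ ℂ, (∀ w ∈ c.support, r ≤ w.length) ∧ ‖z - orbitMap V x c‖ < ε := by
  obtain ⟨y, hy, hzy⟩ := Metric.mem_closure_iff.1 hz ε hε
  obtain ⟨c, hc, rfl⟩ := (Finsupp.mem_span_image_iff_linearCombination ℂ).1 hy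
  exact ⟨c, fun w hw ↦ (Finsupp.mem_supported _ _).1 hc hw, by rwa [← dist_eq_norm]⟩

theorem HasRieszOrbit.exists_norm_orbitMap_le (hx : HasRieszOrbit V x) :
    ∃ C > 0, ∀ a b : List ι →₀ ℂ, Disjoint a.support b.support →
      ‖orbitMap V x a‖ ≤ C * ‖orbitMap V x a - orbitMap V x b‖ := by
  obtain ⟨A, B, hA, hB, hAB⟩ := hx
  refine ⟨B / A, by positivity, fun a b hab ↦ ?_⟩
  calc ‖orbitMap V x a‖
      ≤ B * l2Norm a := (hAB a).2
    _ ≤ B * l2Norm (a - b) := by gcongr; exact l2Norm_le_l2Norm_sub hab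
    _ = B / A * (A * l2Norm (a - b)) := by field_simp
    _ ≤ B / A * ‖orbitMap V x a - orbitMap V x b‖ := by
      rw [← map_sub]
      gcongr
      exact (hAB _).1

theorem HasRieszOrbit.eq_zero_of_forall_mem_orbitTail (hx : HasRieszOrbit V x) {z : E}
    (hz : ∀ r, z ∈ orbitTail V x r) : z = 0 := by
  obtain ⟨C, hC, hsep⟩ := hx.exists_norm_orbitMap_le
  rw [← norm_le_zero_iff]
  refine le_of_forall_pos_le_add fun ε hε ↦ ?_
  set δ := ε / (1 + 2 * C)
  have hδ : 0 < δ := by positivity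
  obtain ⟨a, -, ha⟩ := exists_norm_sub_orbitMap_lt (hz 0) hδ
  obtain ⟨b, hb_long, hb⟩ := exists_norm_sub_orbitMap_lt (hz (a.support.sup List.length + 1)) hδ
  have hdisj : Disjoint a.support b.support := Finset.disjoint_left.2 fun w hwa hwb ↦
    (Finset.le_sup (f := List.length) hwa).not_gt (hb_long w hwb)
  have hsub : ‖orbitMap V x a - orbitMap V x b‖ ≤ 2 * δ := by
    have := norm_sub_le (z - orbitMap V x b) (z - orbitMap V x a)
    rw [sub_sub_sub_cancel_left] at this
    linarith
  calc ‖z‖ ≤ ‖z - orbitMap V x a‖ + ‖orbitMap V x a‖ := norm_le_norm_sub_add _ _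
    _ ≤ δ + C * (2 * δ) := add_le_add ha.le ((hsep a b hdisj).trans (by gcongr))
    _ = 0 + ε := by simp only [δ]; field_simp; ring

end OrbitTail

/-- The closed linear span of the wandering vectors of `V` that lie in `M`. -/
def wanderingSpan (V : ι → E →L[ℂ] E) (M : Submodule ℂ E) : Submodule ℂ E :=
  (Submodule.span ℂ {ζ : E | ζ ∈ M ∧ IsWandering V ζ}).topologicalClosure

theorem IsWandering.mem_wanderingSpan {ζ : E} (h : IsWandering V ζ) (hζ : ζ ∈ M) :
    ζ ∈ wanderingSpan V M :=
  Submodule.le_topologicalClosure _ (Submodule.subset_span ⟨hζ, h⟩)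

theorem isClosed_wanderingSpan (V : ι → E →L[ℂ] E) (M : Submodule ℂ E) :
    IsClosed (wanderingSpan V M : Set E) :=
  Submodule.isClosed_topologicalClosure _

theorem wanderingSpan_le_iff (hN : IsClosed (N : Set E)) :
    wanderingSpan V M ≤ N ↔ ∀ ζ ∈ M, IsWandering V ζ → ζ ∈ N :=
  ⟨fun h _ hζ hw ↦ h (hw.mem_wanderingSpan hζ), fun h ↦
    Submodule.topologicalClosure_minimal _ (Submodule.span_le.2 fun ζ hζ ↦ h ζ hζ.1 hζ.2) hN⟩

theorem wanderingSpan_le (hM : IsClosed (M : Set E)) : wanderingSpan V M ≤ M :=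
  (wanderingSpan_le_iff hM).2 fun _ hζ _ ↦ hζ

theorem wanderingSpan_mono (h : M ≤ N) : wanderingSpan V M ≤ wanderingSpan V N :=
  (wanderingSpan_le_iff (isClosed_wanderingSpan V N)).2 fun _ hζ hw ↦ hw.mem_wanderingSpan (h hζ)

theorem wanderingSpan_eq_bot (h : ∀ ζ ∈ M, ¬ IsWandering V ζ) : wanderingSpan V M = ⊥ :=
  le_bot_iff.1 ((wanderingSpan_le_iff isClosed_singleton).2 fun ζ hζ hw ↦ (h ζ hζ hw).elim)

theorem invariantUnder_wanderingSpan {W : κ → E →L[ℂ] E} (hM : InvariantUnder W M)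
    (hW : ∀ b ζ, IsWandering V ζ → IsWandering V (W b ζ)) :
    InvariantUnder W (wanderingSpan V M) := by
  intro b
  exact (wanderingSpan_le_iff (N := (wanderingSpan V M).comap (W b).toLinearMap)
    ((isClosed_wanderingSpan V M).preimage (W b).continuous)).2
    fun ζ hζ hw ↦ (hW b ζ hw).mem_wanderingSpan (hM b ζ hζ)

/-- The operators `V a` are isometries with pairwise orthogonal ranges. -/
def IsRowIsometry (V : ι → E →L[ℂ] E) : Prop :=
  ∀ a b x y, ⟪V a x, V b y⟫ = if a = b then ⟪x, y⟫ else 0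

namespace IsRowIsometry

theorem inner_wordOp (hV : IsRowIsometry V) (x y : E) : ∀ {w w' : List ι},
    w.length = w'.length → ⟪wordOp V w x, wordOp V w' y⟫ = if w = w' then ⟪x, y⟫ else 0
  | [], [], _ => by simp
  | a :: w, b :: w', h => by
    have ih := hV.inner_wordOp x y (w := w) (w' := w') (by simpa using h)
    rw [wordOp_cons, wordOp_cons, mul_apply_eq_comp, mul_apply_eq_comp, hV,
      ih, ← ite_and]
    simp only [List.cons.injEq]

theorem isWandering (hV : IsRowIsometry V) {ζ : E} (hζ : ‖ζ‖ = 1)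
    (h : ∀ w, w ≠ [] → ⟪wordOp V w ζ, ζ⟫ = 0) : IsWandering V ζ := by
  refine ⟨hζ, fun w ↦ ?_⟩
  induction w with
  | nil =>
    rintro (_ | ⟨b, w'⟩)
    · simp [inner_self_eq_norm_sq_to_K, hζ]
    · simpa using inner_eq_zero_symm.1 (h (b :: w') (by simp))
  | cons a w ih =>
    rintro (_ | ⟨b, w'⟩)
    · simpa using h (a :: w) (by simp)
    · rw [wordOp_cons, wordOp_cons, mul_apply_eq_comp, mul_apply_eq_comp,
        hV, ih, ← ite_and]
      simp only [List.cons.injEq]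

end IsRowIsometry

theorem IsRowIsometry.mem_wanderingSpan_of_forall_inner_eq_zero (hV : IsRowIsometry V)
    (hM : InvariantUnder V M) {y : E} (hy : y ∈ M) (h : ∀ a, ∀ z ∈ M, ⟪V a z, y⟫ = 0) :
    y ∈ wanderingSpan V M := by
  rcases eq_or_ne y 0 with rfl | hy0
  · exact zero_mem _
  have hnorm : (‖y‖ : ℂ) ≠ 0 := by simpa
  have hmem : (‖y‖⁻¹ : ℂ) • y ∈ M := M.smul_mem _ hy
  have hw : IsWandering V ((‖y‖⁻¹ : ℂ) • y) := by
    refine hV.isWandering (by simp [norm_smul, hy0]) fun w hw ↦ ?_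
    obtain ⟨a, w, rfl⟩ := List.exists_cons_of_ne_nil hw
    rw [wordOp_cons, mul_apply_eq_comp, inner_smul_right, h a _ (hM.wordOp_apply_mem w hmem),
      mul_zero]
  simpa [smul_smul, hnorm] using
    (wanderingSpan V M).smul_mem (‖y‖ : ℂ) (hw.mem_wanderingSpan hmem)

/-- The diagonal ampliation `A ↦ A ⊕ ⋯ ⊕ A` to the Hilbert space direct sum of copies of the
space indexed by `F`. -/
def ampliation (F : Type*) [Fintype F] :
    (E →L[ℂ] E) →ₐ[ℂ] (PiLp 2 (fun _ : F ↦ E) →L[ℂ] PiLp 2 (fun _ : F ↦ E)) :=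
  AlgHom.ofLinearMap
    { toFun A := (PiLp.continuousLinearEquiv 2 ℂ fun _ : F ↦ E).symm.toContinuousLinearMap ∘L
        ContinuousLinearMap.pi fun i ↦ A ∘L PiLp.proj 2 (fun _ : F ↦ E) i
      map_add' _ _ := rfl
      map_smul' _ _ := rfl }
    rfl fun _ _ ↦ rfl

section Ampliation

variable {F : Type*} [Fintype F]

@[simp] theorem ampliation_apply_apply (A : E →L[ℂ] E) (x : PiLp 2 fun _ : F ↦ E) (i : F) :
    ampliation F A x i = A (x i) := rfl

theorem orbitMap_ampliation_apply (x : PiLp 2 fun _ : F ↦ E) (c : List ι →₀ ℂ) (i : F) :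
    orbitMap (fun a ↦ ampliation F (V a)) x c i = orbitMap V (x i) c :=
  map_orbitMap (PiLp.proj 2 (fun _ : F ↦ E) i).toLinearMap (fun _ _ ↦ rfl) x c

theorem IsWandering.hasContractiveOrbit_apply {ζ : PiLp 2 fun _ : F ↦ E}
    (h : IsWandering (fun a ↦ ampliation F (V a)) ζ) (i : F) : HasContractiveOrbit V (ζ i) := by
  intro c
  rw [← h.norm_orbitMap, ← orbitMap_ampliation_apply]
  exact PiLp.norm_apply_le _ _

theorem isRowIsometry_ampliation (hV : IsRowIsometry V) :
    IsRowIsometry fun a ↦ ampliation F (V a) := by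
  intro a b x y
  simp only [PiLp.inner_apply, ampliation_apply_apply, hV a b]
  split_ifs <;> simp

theorem ampliation_mem_adjoin {B : E →L[ℂ] E} (hB : B ∈ Algebra.adjoin ℂ (Set.range V)) :
    ampliation F B ∈ Algebra.adjoin ℂ (Set.range fun a ↦ ampliation F (V a)) := by
  rw [Set.range_comp' (ampliation F) V, ← AlgHom.map_adjoin]
  exact ⟨B, hB, rfl⟩

end Ampliation

theorem exists_mem_adjoin_forall_orbitMap_eq (V : ι → E →L[ℂ] E) (c : List ι →₀ ℂ) :
    ∃ C ∈ Algebra.adjoin ℂ (Set.range V), ∀ x, orbitMap V x c = C x := by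
  refine ⟨∑ w ∈ c.support, c w • wordOp V w, ?_, fun x ↦ ?_⟩
  · refine sum_mem fun w _ ↦ Subalgebra.smul_mem _ (list_prod_mem fun B hB ↦ ?_) _
    obtain ⟨a, -, rfl⟩ := List.mem_map.1 hB
    exact Algebra.subset_adjoin ⟨a, rfl⟩
  · simp [orbitMap, Finsupp.linearCombination_apply, Finsupp.sum]

theorem mem_wotClosure_of_forall_exists_norm_lt
    {S : Set (E →L[ℂ] E)} {A : E →L[ℂ] E}
    (h : ∀ (F : Finset E) (δ : ℝ), 0 < δ → ∃ B ∈ S, ∀ x ∈ F, ‖(A - B) x‖ < δ) :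
    A ∈ wotClosure S := by
  intro ε hε F
  set s := ∑ p ∈ F, ‖p.1‖
  have : 0 ≤ s := Finset.sum_nonneg fun _ _ ↦ norm_nonneg _
  obtain ⟨B, hB, hAB⟩ := h (F.image Prod.snd) (ε / (s + 1)) (by positivity)
  refine ⟨B, hB, fun p hp ↦ ?_⟩
  have hp1 : ‖p.1‖ ≤ s :=
    Finset.single_le_sum (f := fun p : E × E ↦ ‖p.1‖) (fun _ _ ↦ norm_nonneg _) hp
  calc ‖⟪p.1, (A - B) p.2⟫‖
      ≤ ‖p.1‖ * ‖(A - B) p.2‖ := norm_inner_le_norm _ _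
    _ ≤ s * (ε / (s + 1)) := by
      gcongr
      exact (hAB _ (Finset.mem_image_of_mem _ hp)).le
    _ < ε := by
      rw [mul_div_assoc', div_lt_iff₀ (by positivity)]
      linarith

theorem isRowIsometry_restrictCLM (hV : IsRowIsometry V) (hM : InvariantUnder V M) :
    IsRowIsometry fun a ↦ restrictCLM (V a) M := by
  intro a b x y
  simp only [Submodule.coe_inner, coe_restrictCLM_apply (hM _), hV a b]

section Adjoints

variable [CompleteSpace E]

theorem inner_star_right (A : E →L[ℂ] E) (x y : E) : ⟪x, star A y⟫ = ⟪A x, y⟫ :=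
  A.adjoint_inner_right x y

theorem sum_apply_star_apply [Fintype ι] (h : ∑ a, V a * star (V a) = 1) (x : E) :
    ∑ a, V a (star (V a) x) = x := by
  simpa using congr($h x)

theorem InvariantUnder.orthogonal (hM : InvariantUnder V M) : InvariantUnder (star V) Mᗮ := by
  refine fun a x hx ↦ (Submodule.mem_orthogonal _ _).2 fun u hu ↦ ?_
  rw [Pi.star_apply, inner_star_right]
  exact Submodule.inner_right_of_mem_orthogonal (hM a u hu) hx

theorem InvariantUnder.orthogonal_of_star (hM : InvariantUnder (star V) M) :
    InvariantUnder V Mᗮ := by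
  simpa using hM.orthogonal

theorem InvariantUnder.starProjection_apply [M.HasOrthogonalProjection] (hM : InvariantUnder V M)
    (hM' : InvariantUnder (star V) M) (a : ι) (x : E) :
    M.starProjection (V a x) = V a (M.starProjection x) := by
  refine Submodule.eq_starProjection_of_mem_orthogonal (hM a _ (M.starProjection_apply_mem x)) ?_
  rw [← map_sub]
  exact hM'.orthogonal_of_star a _ (M.sub_starProjection_mem_orthogonal x)

theorem HasContractiveOrbit.starProjection [M.HasOrthogonalProjection] (hM : InvariantUnder V M)
    (hM' : InvariantUnder (star V) M) {x : E} (hx : HasContractiveOrbit V x) :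
    HasContractiveOrbit V (M.starProjection x) := fun c ↦
  calc ‖orbitMap V (M.starProjection x) c‖
      = ‖M.starProjection (orbitMap V x c)‖ :=
        (congrArg norm
          (map_orbitMap M.starProjection.toLinearMap (hM.starProjection_apply hM') x c)).symm
    _ ≤ ‖orbitMap V x c‖ := M.norm_starProjection_apply_le _
    _ ≤ l2Norm c := hx c

namespace IsRowIsometry

theorem star_apply (hV : IsRowIsometry V) (a b : ι) (x : E) :
    star (V a) (V b x) = if a = b then x else 0 := by
  refine ext_inner_left ℂ fun y ↦ ?_
  rw [inner_star_right, hV]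
  split_ifs <;> simp

-- The part of `x` orthogonal to all the `V a M` lies in the wandering span, so it vanishes.
theorem mem_closure_iSup_map (hV : IsRowIsometry V) (hMc : IsClosed (M : Set E))
    (hM : InvariantUnder V M) {x : E} (hxM : x ∈ M) (hx : x ∈ (wanderingSpan V M)ᗮ) :
    x ∈ (⨆ a, M.map (V a).toLinearMap).topologicalClosure := by
  set R := (⨆ a, M.map (V a).toLinearMap).topologicalClosure
  have hR (a : ι) {z : E} (hz : z ∈ M) : V a z ∈ R :=
    Submodule.le_topologicalClosure _ (Submodule.mem_iSup_of_mem a ⟨z, hz, rfl⟩)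
  have hRM : R ≤ M := Submodule.topologicalClosure_minimal _
    (iSup_le fun a ↦ Submodule.map_le_iff_le_comap.2 (hM a)) hMc
  have : CompleteSpace R := (Submodule.isClosed_topologicalClosure _).completeSpace_coe
  have hPx : R.starProjection x ∈ R := R.starProjection_apply_mem x
  have hsub : x - R.starProjection x ∈ Rᗮ := R.sub_starProjection_mem_orthogonal x
  have hwand : x - R.starProjection x ∈ wanderingSpan V M :=
    hV.mem_wanderingSpan_of_forall_inner_eq_zero hM (M.sub_mem hxM (hRM hPx)) fun a z hz ↦
      Submodule.inner_right_of_mem_orthogonal (hR a hz) hsub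
  have hzero : x - R.starProjection x = 0 := by
    rw [← inner_self_eq_zero (𝕜 := ℂ), inner_sub_right,
      Submodule.inner_right_of_mem_orthogonal hwand hx,
      Submodule.inner_left_of_mem_orthogonal hPx hsub, sub_zero]
  rwa [← sub_eq_zero.1 hzero] at hPx

theorem invariantUnder_star_inf_orthogonal_wanderingSpan (hV : IsRowIsometry V)
    (hMc : IsClosed (M : Set E)) (hM : InvariantUnder V M) :
    InvariantUnder (star V) (M ⊓ (wanderingSpan V M)ᗮ) := by
  rintro b x ⟨hxM, hx⟩
  refine ⟨?_, (invariantUnder_wanderingSpan hM fun a _ hζ ↦ hζ.apply a).orthogonal b x hx⟩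
  suffices h : (⨆ a, M.map (V a).toLinearMap).topologicalClosure ≤
      M.comap (star (V b)).toLinearMap from h (hV.mem_closure_iSup_map hMc hM hxM hx)
  refine Submodule.topologicalClosure_minimal _ (iSup_le fun a ↦ ?_)
    (hMc.preimage (star (V b)).continuous)
  rintro _ ⟨z, hz, rfl⟩
  rw [Submodule.mem_comap, ContinuousLinearMap.coe_coe, ContinuousLinearMap.coe_coe,
    hV.star_apply]
  split_ifs
  exacts [hz, M.zero_mem]

theorem invariantUnder_star_of_forall_not_isWandering (hV : IsRowIsometry V)
    (hMc : IsClosed (M : Set E)) (hM : InvariantUnder V M) (h : ∀ ζ ∈ M, ¬ IsWandering V ζ) :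
    InvariantUnder (star V) M := by
  simpa [wanderingSpan_eq_bot h] using
    hV.invariantUnder_star_inf_orthogonal_wanderingSpan hMc hM

theorem mem_wanderingSpan_of_hasRieszOrbit [Fintype ι] (hV : IsRowIsometry V)
    (hsum : ∑ a, V a * star (V a) = 1) (hMc : IsClosed (M : Set E)) (hM : InvariantUnder V M)
    {y : E} (hy : y ∈ M) (hriesz : HasRieszOrbit V y) : y ∈ wanderingSpan V M := by
  set L := orbitTail V y 0
  set D := L ⊓ (wanderingSpan V L)ᗮ with hD_def
  have hLc : IsClosed (L : Set E) := isClosed_orbitTail V y 0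
  have hD : InvariantUnder (star V) D :=
    hV.invariantUnder_star_inf_orthogonal_wanderingSpan hLc (invariantUnder_orbitTail_zero V y)
  have hD_le (r : ℕ) : D ≤ orbitTail V y r := by
    induction r with
    | zero => exact inf_le_left
    | succ r ih =>
      intro z hz
      rw [← sum_apply_star_apply hsum z]
      exact Submodule.sum_mem _ fun a _ ↦ apply_mem_orbitTail_succ (ih (hD a z hz)) a
  have hD_bot : D = ⊥ := (Submodule.eq_bot_iff _).2 fun z hz ↦
    hriesz.eq_zero_of_forall_mem_orbitTail fun r ↦ hD_le r hz
  have : CompleteSpace (wanderingSpan V L) := (isClosed_wanderingSpan V L).completeSpace_coe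
  have hspan : wanderingSpan V L = L := by
    have := Submodule.sup_orthogonal_inf_of_hasOrthogonalProjection (wanderingSpan_le hLc (V := V))
    rwa [inf_comm, ← hD_def, hD_bot, sup_bot_eq] at this
  have hLM : L ≤ M := orbitTail_le hMc fun w _ ↦ hM.wordOp_apply_mem w hy
  refine wanderingSpan_mono hLM (hspan.ge ?_)
  simpa using wordOp_apply_mem_orbitTail (V := V) (x := y) (w := []) le_rfl

theorem mem_wanderingSpan_of_hasContractiveOrbit [Fintype ι] (hV : IsRowIsometry V)
    (hsum : ∑ a, V a * star (V a) = 1) (hMc : IsClosed (M : Set E)) (hM : InvariantUnder V M)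
    {η x : E} (hηM : η ∈ M) (hη : IsWandering V η) (hxM : x ∈ M) (hx : HasContractiveOrbit V x) :
    x ∈ wanderingSpan V M := by
  have hsum_mem : η + (2⁻¹ : ℂ) • x ∈ wanderingSpan V M :=
    hV.mem_wanderingSpan_of_hasRieszOrbit hsum hMc hM (M.add_mem hηM (M.smul_mem _ hxM))
      (hη.hasRieszOrbit_add_smul hx)
  have hhalf : (2⁻¹ : ℂ) • x ∈ wanderingSpan V M :=
    ((wanderingSpan V M).add_mem_iff_right (hη.mem_wanderingSpan hηM)).1 hsum_mem
  exact ((wanderingSpan V M).smul_mem_iff (by norm_num)).1 hhalf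

end IsRowIsometry

theorem star_mem_wotClosure {S T : Set (E →L[ℂ] E)} {A : E →L[ℂ] E}
    (hA : A ∈ wotClosure S) (h : ∀ B ∈ S, star B ∈ wotClosure T) :
    star A ∈ wotClosure T := by
  intro ε hε F
  obtain ⟨B, hB, hAB⟩ := hA (ε / 2) (half_pos hε) (F.image Prod.swap)
  obtain ⟨C, hC, hBC⟩ := h B hB (ε / 2) (half_pos hε) F
  refine ⟨C, hC, fun p hp ↦ ?_⟩
  have hstar : ‖⟪p.1, (star A - star B) p.2⟫‖ < ε / 2 := by
    rw [← star_sub, inner_star_right, norm_inner_symm]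
    exact hAB p.swap (Finset.mem_image_of_mem _ hp)
  calc ‖⟪p.1, (star A - C) p.2⟫‖
      = ‖⟪p.1, (star A - star B) p.2⟫ + ⟪p.1, (star B - C) p.2⟫‖ := by
        rw [← inner_add_right, ← add_apply, sub_add_sub_cancel]
    _ < ε := (norm_add_le _ _).trans_lt (by linarith [hBC p hp])

theorem InvariantUnder.star_apply_mem_of_mem_adjoin (hM : InvariantUnder (star V) M)
    {B : E →L[ℂ] E} (hB : B ∈ Algebra.adjoin ℂ (Set.range V)) {x : E} (hx : x ∈ M) :
    star B x ∈ M := by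
  suffices h : star B ∈ Algebra.adjoin ℂ (Set.range (star V)) from hM.adjoin_apply_mem h hx
  have hrange : Set.range (star V) = star (Set.range V) := by
    rw [← Set.image_star, ← Set.range_comp]
    rfl
  rw [hrange, ← Subalgebra.star_adjoin_comm]
  exact (Subalgebra.star_mem_star_iff _ _).2 hB

theorem star_ampliation {F : Type*} [Fintype F] (A : E →L[ℂ] E) :
    star (ampliation F A) = ampliation F (star A) := by
  refine ContinuousLinearMap.ext fun x ↦ ext_inner_left ℂ fun y ↦ ?_
  rw [inner_star_right]
  simp [PiLp.inner_apply, inner_star_right]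

theorem IsRowIsometry.exists_mem_adjoin_forall_norm_star_sub_lt (hV : IsRowIsometry V)
    (h : ∀ x, HasContractiveOrbit V x → x = 0) {B : E →L[ℂ] E}
    (hB : B ∈ Algebra.adjoin ℂ (Set.range V)) (F : Finset E) {δ : ℝ} (hδ : 0 < δ) :
    ∃ C ∈ Algebra.adjoin ℂ (Set.range V), ∀ y ∈ F, ‖(star B - C) y‖ < δ := by
  set x : PiLp 2 fun _ : F ↦ E := WithLp.toLp 2 fun i ↦ i
  set W := fun a ↦ ampliation F (V a)
  have hW (ζ : PiLp 2 fun _ : F ↦ E) : ¬ IsWandering W ζ := fun hζ ↦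
    hζ.ne_zero (PiLp.ext fun i ↦ h _ (hζ.hasContractiveOrbit_apply i))
  have hcoinv : InvariantUnder (star W) (orbitTail W x 0) :=
    (isRowIsometry_ampliation hV).invariantUnder_star_of_forall_not_isWandering
      (isClosed_orbitTail W x 0) (invariantUnder_orbitTail_zero W x) fun ζ _ ↦ hW ζ
  have hx : x ∈ orbitTail W x 0 := wordOp_apply_mem_orbitTail (V := W) (w := []) le_rfl
  obtain ⟨c, -, hc⟩ := exists_norm_sub_orbitMap_lt
    (hcoinv.star_apply_mem_of_mem_adjoin (ampliation_mem_adjoin hB) hx) hδ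
  obtain ⟨C, hC, hcC⟩ := exists_mem_adjoin_forall_orbitMap_eq V c
  refine ⟨C, hC, fun y hy ↦ ?_⟩
  calc ‖(star B - C) y‖
      = ‖(star (ampliation F B) x - orbitMap W x c) ⟨y, hy⟩‖ := by
        simp [x, star_ampliation, W, orbitMap_ampliation_apply, hcC]
    _ ≤ ‖star (ampliation F B) x - orbitMap W x c‖ := PiLp.norm_apply_le _ _
    _ < δ := hc

theorem IsRowIsometry.star_mem_genWotAlg (hV : IsRowIsometry V)
    (h : ∀ x, HasContractiveOrbit V x → x = 0) {A : E →L[ℂ] E}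
    (hA : A ∈ genWotAlg (Set.range V)) : star A ∈ genWotAlg (Set.range V) :=
  star_mem_wotClosure hA fun _ hB ↦ mem_wotClosure_of_forall_exists_norm_lt fun F _ hδ ↦
    hV.exists_mem_adjoin_forall_norm_star_sub_lt h hB F hδ

theorem IsRowIsometry.restrictedAlgSelfAdjoint (hV : IsRowIsometry V)
    (hMc : IsClosed (M : Set E)) (hM : InvariantUnder V M)
    (h : ∀ x ∈ M, HasContractiveOrbit V x → x = 0) : restrictedAlgSelfAdjoint V M := by
  have : CompleteSpace M := hMc.completeSpace_coe
  have hcontr (x : M) (hx : HasContractiveOrbit (fun a ↦ restrictCLM (V a) M) x) :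
      x = 0 := by
    refine Subtype.ext (h x x.2 fun c ↦ ?_)
    have hcoe := map_orbitMap M.subtype (fun a z ↦ coe_restrictCLM_apply (hM a) z) x c
    rw [Submodule.subtype_apply, Submodule.subtype_apply] at hcoe
    rw [← hcoe]
    exact hx c
  intro A hA
  exact ⟨star A, (isRowIsometry_restrictCLM hV hM).star_mem_genWotAlg hcontr hA, fun x y ↦
    (inner_star_right A x y).symm⟩

namespace IsDilationType

variable [Fintype ι]

theorem not_isWandering (hd : IsDilationType V) (hV : IsRowIsometry V)
    (hMc : IsClosed (M : Set E)) (hM : InvariantUnder V M) (hM' : InvariantUnder (star V) M)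
    (hle : M ≤ wanderingSpan V ⊤) {η : E} (hηM : η ∈ M) : ¬ IsWandering V η := by
  intro hη
  have : CompleteSpace M := hMc.completeSpace_coe
  have hproj : wanderingSpan V ⊤ ≤ (wanderingSpan V M).comap M.starProjection.toLinearMap :=
    (wanderingSpan_le_iff
      ((isClosed_wanderingSpan V M).preimage M.starProjection.continuous)).2 fun ζ _ hζ ↦
      hV.mem_wanderingSpan_of_hasContractiveOrbit hd.1 hMc hM hηM hη
        (M.starProjection_apply_mem ζ) (hζ.hasContractiveOrbit.starProjection hM hM')
  have hspan : M ≤ wanderingSpan V M := fun x hx ↦ by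
    simpa [Submodule.starProjection_eq_self_iff.2 hx] using hproj (hle hx)
  refine hd.2 ⟨M, ?_, hMc, hM, hM', Or.inl (hspan.antisymm (wanderingSpan_le hMc))⟩
  rintro rfl
  exact hη.ne_zero ((Submodule.mem_bot ℂ).1 hηM)

theorem eq_bot_of_inf_wanderingSpan_eq_bot (hd : IsDilationType V) (hV : IsRowIsometry V)
    (hMc : IsClosed (M : Set E)) (hM : InvariantUnder V M) (hM' : InvariantUnder (star V) M)
    {η : E} (hη : IsWandering V η) (hdisj : M ⊓ wanderingSpan V ⊤ = ⊥) : M = ⊥ := by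
  by_contra hne
  refine hd.2 ⟨M, hne, hMc, hM, hM',
    Or.inr (hV.restrictedAlgSelfAdjoint hMc hM fun x hxM hx ↦ ?_)⟩
  have hxw : x ∈ wanderingSpan V ⊤ := hV.mem_wanderingSpan_of_hasContractiveOrbit hd.1
    isClosed_univ .top Submodule.mem_top hη Submodule.mem_top hx
  simpa [hdisj] using Submodule.mem_inf.2 ⟨hxM, hxw⟩

end IsDilationType

/-- The largest coinvariant subspace for `V` contained in `M`. -/
def coinvariantCore (V : ι → E →L[ℂ] E) (M : Submodule ℂ E) : Submodule ℂ E :=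
  ⨅ w, M.comap (star (wordOp V w)).toLinearMap

theorem mem_coinvariantCore {x : E} :
    x ∈ coinvariantCore V M ↔ ∀ w, star (wordOp V w) x ∈ M := by
  simp [coinvariantCore]

theorem coinvariantCore_le : coinvariantCore V M ≤ M := fun _ hx ↦ by
  simpa using mem_coinvariantCore.1 hx []

theorem isClosed_coinvariantCore (hM : IsClosed (M : Set E)) :
    IsClosed (coinvariantCore V M : Set E) := by
  rw [coinvariantCore, Submodule.coe_iInf]
  exact isClosed_iInter fun w ↦ hM.preimage (star (wordOp V w)).continuous

theorem invariantUnder_star_coinvariantCore : InvariantUnder (star V) (coinvariantCore V M) :=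
  fun a _ hx ↦ mem_coinvariantCore.2 fun w ↦ by simpa using mem_coinvariantCore.1 hx (a :: w)

theorem InvariantUnder.star_wordOp_apply_mem (hM : InvariantUnder (star V) M) (w : List ι) {x : E}
    (hx : x ∈ M) : star (wordOp V w) x ∈ M := by
  induction w generalizing x with
  | nil => simpa
  | cons a w ih => simpa using ih (hM a x hx)

theorem InvariantUnder.le_coinvariantCore (hN : InvariantUnder (star V) N) (h : N ≤ M) :
    N ≤ coinvariantCore V M :=
  fun _ hx ↦ mem_coinvariantCore.2 fun w ↦ h (hN.star_wordOp_apply_mem w hx)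

end Adjoints

end RowOperators

namespace TwoGraphRep

variable {m n : ℕ} {θ : Equiv.Perm (Fin m × Fin n)} {H : Type*}
  [NormedAddCommGroup H] [InnerProductSpace ℂ H] [CompleteSpace H] {ρ : TwoGraphRep m n θ H}
  {A B : H →L[ℂ] H} {d e : ℕ × ℕ} {k l p q : ℕ} {M : Submodule ℂ H}

theorem isRowIsometry_S (ρ : TwoGraphRep m n θ H) : IsRowIsometry ρ.S := fun i i' x y ↦ by
  rw [← inner_star_right, ← mul_apply_eq_comp, ρ.isometS]
  split_ifs <;> simp

theorem isRowIsometry_T (ρ : TwoGraphRep m n θ H) : IsRowIsometry ρ.T := fun j j' x y ↦ by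
  rw [← inner_star_right, ← mul_apply_eq_comp, ρ.isometT]
  split_ifs <;> simp

theorem T_mul_S (ρ : TwoGraphRep m n θ H) (j : Fin n) (i : Fin m) :
    ρ.T j * ρ.S i = ρ.S (θ.symm (i, j)).1 * ρ.T (θ.symm (i, j)).2 := by
  rw [ρ.comm]
  simp

theorem inner_wordOp_mul_wordOp (ρ : TwoGraphRep m n θ H) {u u' : List (Fin m)}
    {v v' : List (Fin n)} (hu : u.length = u'.length) (hv : v.length = v'.length) (x y : H) :
    ⟪(wordOp ρ.S u * wordOp ρ.T v) x, (wordOp ρ.S u' * wordOp ρ.T v') y⟫ =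
      if u = u' ∧ v = v' then ⟪x, y⟫ else 0 := by
  rw [mul_apply_eq_comp, mul_apply_eq_comp, ρ.isRowIsometry_S.inner_wordOp _ _ hu,
    ρ.isRowIsometry_T.inner_wordOp _ _ hv]
  split_ifs <;> simp_all only [true_and, not_true_eq_false, and_true]

/-- The generators `S_i` and `T_j` as a single family. A subspace reduces the representation if it
is invariant under both `generator ρ` and `star (generator ρ)`. -/
def generator (ρ : TwoGraphRep m n θ H) : Fin m ⊕ Fin n → H →L[ℂ] H :=
  Sum.elim ρ.S ρ.T

/-- The degree in `ℕ²` of a generator: `(1, 0)` for the `S_i` and `(0, 1)` for the `T_j`. -/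
def generatorDegree (g : Fin m ⊕ Fin n) : ℕ × ℕ :=
  g.elim (fun _ ↦ (1, 0)) fun _ ↦ (0, 1)

/-- `A` is one of the operators `S_u T_v` with `(|u|, |v|) = d`, that is, the image of a path of
degree `d` in the 2-graph. -/
def HasDegree (ρ : TwoGraphRep m n θ H) (d : ℕ × ℕ) (A : H →L[ℂ] H) : Prop :=
  ∃ u v, u.length = d.1 ∧ v.length = d.2 ∧ A = wordOp ρ.S u * wordOp ρ.T v

theorem hasDegree_one (ρ : TwoGraphRep m n θ H) : ρ.HasDegree 0 1 :=
  ⟨[], [], rfl, rfl, by simp⟩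

theorem hasDegree_generator (ρ : TwoGraphRep m n θ H) :
    ∀ g, ρ.HasDegree (generatorDegree g) (ρ.generator g)
  | .inl i => ⟨[i], [], rfl, rfl, by simp [generator]⟩
  | .inr j => ⟨[], [j], rfl, rfl, by simp [generator]⟩

namespace HasDegree

theorem mul (hA : ρ.HasDegree d A) (hB : ρ.HasDegree e B) : ρ.HasDegree (d + e) (A * B) := by
  obtain ⟨u, v, hu, hv, rfl⟩ := hA
  obtain ⟨u', v', hu', hv', rfl⟩ := hB
  obtain ⟨u'', v'', hu'', hv'', hswap⟩ :=
    exists_wordOp_mul_wordOp (fun j i ↦ ⟨_, _, ρ.T_mul_S j i⟩) v u'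
  refine ⟨u ++ u'', v'' ++ v', by simp [*], by simp [*], ?_⟩
  calc wordOp ρ.S u * wordOp ρ.T v * (wordOp ρ.S u' * wordOp ρ.T v')
      = wordOp ρ.S u * (wordOp ρ.T v * wordOp ρ.S u') * wordOp ρ.T v' := by
        simp only [mul_assoc]
    _ = wordOp ρ.S (u ++ u'') * wordOp ρ.T (v'' ++ v') := by
        simp only [hswap, wordOp_append, mul_assoc]

theorem exists_eq_mul (hA : ρ.HasDegree (d + e) A) :
    ∃ B C, ρ.HasDegree d B ∧ ρ.HasDegree e C ∧ A = B * C := by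
  obtain ⟨w, z, hw, hz, rfl⟩ := hA
  obtain ⟨u, u', rfl, hu, hu'⟩ : ∃ u u', w = u ++ u' ∧ u.length = d.1 ∧ u'.length = e.1 :=
    ⟨w.take d.1, w.drop d.1, by simp, by simp [hw], by simp [hw]⟩
  obtain ⟨v, v', rfl, hv, hv'⟩ : ∃ v v', z = v ++ v' ∧ v.length = d.2 ∧ v'.length = e.2 :=
    ⟨z.take d.2, z.drop d.2, by simp, by simp [hz], by simp [hz]⟩
  obtain ⟨v'', u'', hv'', hu'', hswap⟩ :=
    exists_wordOp_mul_wordOp (fun i j ↦ ⟨_, _, ρ.comm i j⟩) u' v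
  refine ⟨_, _, ⟨u, v'', hu, hv''.trans hv, rfl⟩, ⟨u'', v', hu''.trans hu', hv', rfl⟩, ?_⟩
  calc wordOp ρ.S (u ++ u') * wordOp ρ.T (v ++ v')
      = wordOp ρ.S u * (wordOp ρ.S u' * wordOp ρ.T v) * wordOp ρ.T v' := by
        simp only [wordOp_append, mul_assoc]
    _ = wordOp ρ.S u * wordOp ρ.T v'' * (wordOp ρ.S u'' * wordOp ρ.T v') := by
        simp only [hswap, mul_assoc]

theorem inner_self_apply (hA : ρ.HasDegree d A) (x y : H) : ⟪A x, A y⟫ = ⟪x, y⟫ := by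
  obtain ⟨u, v, -, -, rfl⟩ := hA
  rw [ρ.inner_wordOp_mul_wordOp rfl rfl, if_pos ⟨rfl, rfl⟩]

theorem star_mul_eq_one_or_eq_zero (hA : ρ.HasDegree d A) (hB : ρ.HasDegree d B) :
    star A * B = 1 ∨ star A * B = 0 := by
  obtain ⟨u, v, hu, hv, rfl⟩ := hA
  obtain ⟨u', v', hu', hv', rfl⟩ := hB
  have hinner (x y : H) := ρ.inner_wordOp_mul_wordOp (hu.trans hu'.symm) (hv.trans hv'.symm) x y
  by_cases h : u = u' ∧ v = v'
  · refine .inl (ContinuousLinearMap.ext fun y ↦ ext_inner_left ℂ fun x ↦ ?_)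
    rw [mul_apply_eq_comp, inner_star_right, hinner, if_pos h, one_apply_eq_self]
  · refine .inr (ContinuousLinearMap.ext fun y ↦ ext_inner_left ℂ fun x ↦ ?_)
    rw [mul_apply_eq_comp, inner_star_right, hinner, if_neg h, zero_apply, inner_zero_right]

theorem star_apply_apply_mem (hA : ρ.HasDegree d A) (hB : ρ.HasDegree d B) {x : H} (hx : x ∈ M) :
    star A (B x) ∈ M := by
  rw [← mul_apply_eq_comp]
  rcases hA.star_mul_eq_one_or_eq_zero hB with h | h <;> simp [h, hx]

theorem apply_mem (hA : ρ.HasDegree d A) (hM : InvariantUnder ρ.generator M) {x : H}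
    (hx : x ∈ M) : A x ∈ M := by
  obtain ⟨u, v, -, -, rfl⟩ := hA
  have hS : InvariantUnder ρ.S M := fun i ↦ hM (.inl i)
  have hT : InvariantUnder ρ.T M := fun j ↦ hM (.inr j)
  exact hS.wordOp_apply_mem u (hT.wordOp_apply_mem v hx)

theorem star_apply_mem (hA : ρ.HasDegree d A) (hM : InvariantUnder (star ρ.generator) M) {x : H}
    (hx : x ∈ M) : star A x ∈ M := by
  obtain ⟨u, v, -, -, rfl⟩ := hA
  have hS : InvariantUnder (star ρ.S) M := fun i ↦ hM (.inl i)
  have hT : InvariantUnder (star ρ.T) M := fun j ↦ hM (.inr j)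
  rw [star_mul]
  exact hT.star_wordOp_apply_mem v (hS.star_wordOp_apply_mem u hx)

theorem exists_eq_rowKL (hA : ρ.HasDegree (k, l) A) : ∃ a, A = ρ.rowKL k l a := by
  obtain ⟨u, v, rfl, rfl, rfl⟩ := hA
  exact ⟨(u.get, v.get), by simp [rowKL, fnWordOp, List.ofFn_get]⟩

theorem exists_eq_wordOp_rowKL {r : ℕ} (hA : ρ.HasDegree (r • (k, l)) A) :
    ∃ w, w.length = r ∧ A = wordOp (ρ.rowKL k l) w := by
  induction r generalizing A with
  | zero =>
    obtain ⟨u, v, hu, hv, rfl⟩ := hA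
    simp only [zero_smul, Prod.fst_zero, Prod.snd_zero, List.length_eq_zero_iff] at hu hv
    exact ⟨[], rfl, by simp [hu, hv]⟩
  | succ r ih =>
    rw [succ_nsmul'] at hA
    obtain ⟨B, C, hB, hC, rfl⟩ := hA.exists_eq_mul
    obtain ⟨a, rfl⟩ := hB.exists_eq_rowKL
    obtain ⟨w, rfl, rfl⟩ := ih hC
    exact ⟨a :: w, rfl, (wordOp_cons _ a w).symm⟩

end HasDegree

theorem hasDegree_rowKL (ρ : TwoGraphRep m n θ H) (k l : ℕ)
    (a : (Fin k → Fin m) × (Fin l → Fin n)) : ρ.HasDegree (k, l) (ρ.rowKL k l a) :=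
  ⟨_, _, List.length_ofFn, List.length_ofFn, rfl⟩

theorem hasDegree_wordOp_rowKL (ρ : TwoGraphRep m n θ H) (k l : ℕ)
    (w : List ((Fin k → Fin m) × (Fin l → Fin n))) :
    ρ.HasDegree (w.length • (k, l)) (wordOp (ρ.rowKL k l) w) := by
  induction w with
  | nil => simpa using ρ.hasDegree_one
  | cons a w ih =>
    rw [wordOp_cons, List.length_cons, succ_nsmul']
    exact (ρ.hasDegree_rowKL k l a).mul ih

theorem isRowIsometry_rowKL (ρ : TwoGraphRep m n θ H) (k l : ℕ) :
    IsRowIsometry (ρ.rowKL k l) := fun a b x y ↦ by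
  rw [rowKL, rowKL, fnWordOp, fnWordOp, fnWordOp, fnWordOp,
    ρ.inner_wordOp_mul_wordOp (by simp) (by simp)]
  simp only [List.ofFn_inj, Prod.ext_iff]

theorem isWandering_rowKL_iff {ζ : H} :
    IsWandering (ρ.rowKL k l) ζ ↔
      ‖ζ‖ = 1 ∧ ∀ r, r ≠ 0 → ∀ A, ρ.HasDegree (r • (k, l)) A → ⟪A ζ, ζ⟫ = 0 := by
  refine ⟨fun h ↦ ⟨h.1, fun r hr A hA ↦ ?_⟩, fun h ↦ ?_⟩
  · obtain ⟨w, rfl, rfl⟩ := hA.exists_eq_wordOp_rowKL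
    simpa [List.length_eq_zero_iff.not.1 hr] using h.2 w []
  · exact (ρ.isRowIsometry_rowKL k l).isWandering h.1 fun w hw ↦
      h.2 _ (List.length_eq_zero_iff.not.2 hw) _ (ρ.hasDegree_wordOp_rowKL k l w)

theorem isWanderingKL_iff (hk : 0 < k) {ζ : H} :
    ρ.IsWanderingKL k l ζ ↔ IsWandering (ρ.rowKL k l) ζ := by
  constructor
  · refine fun h ↦ isWandering_rowKL_iff.2 ⟨h.1, ?_⟩
    rintro r hr _ ⟨u, v, hu, hv, rfl⟩
    have hu_ne : u ≠ [] := by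
      rw [← List.length_pos_iff, hu]
      exact Nat.mul_pos (Nat.pos_of_ne_zero hr) hk
    simpa [hu_ne] using h.2 r 0 u [] v [] hu hv (by simp) (by simp)
  · refine fun h ↦ ⟨h.1, fun p p' u u' v v' hu hv hu' hv' ↦ ?_⟩
    rcases eq_or_ne p p' with rfl | hp
    · rw [ρ.inner_wordOp_mul_wordOp (hu.trans hu'.symm) (hv.trans hv'.symm),
        inner_self_eq_norm_sq_to_K, h.1]
      simp
    · have huu' : u ≠ u' := by
        rintro rfl
        exact hp (Nat.eq_of_mul_eq_mul_right hk (hu.symm.trans hu'))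
      have hA : ρ.HasDegree (p • (k, l)) (wordOp ρ.S u * wordOp ρ.T v) := ⟨u, v, hu, hv, rfl⟩
      have hA' : ρ.HasDegree (p' • (k, l)) (wordOp ρ.S u' * wordOp ρ.T v') :=
        ⟨u', v', hu', hv', rfl⟩
      obtain ⟨w, rfl, hw⟩ := hA.exists_eq_wordOp_rowKL
      obtain ⟨w', rfl, hw'⟩ := hA'.exists_eq_wordOp_rowKL
      rw [hw, hw', h.2, if_neg (mt (congrArg List.length) hp), if_neg (huu' ·.1)]

theorem HasDegree.isWandering_apply {ζ : H} (hA : ρ.HasDegree d A)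
    (h : IsWandering (ρ.rowKL k l) ζ) : IsWandering (ρ.rowKL k l) (A ζ) := by
  have h := isWandering_rowKL_iff.1 h
  refine isWandering_rowKL_iff.2 ⟨?_, fun r hr C hC ↦ ?_⟩
  · rw [norm_eq_sqrt_re_inner (𝕜 := ℂ), hA.inner_self_apply, ← norm_eq_sqrt_re_inner (𝕜 := ℂ), h.1]
  have hCA : ρ.HasDegree (d + r • (k, l)) (C * A) := add_comm d _ ▸ hC.mul hA
  obtain ⟨A', C', hA', hC', hswap⟩ := hCA.exists_eq_mul
  calc ⟪C (A ζ), A ζ⟫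
      = ⟪C' ζ, (star A' * A) ζ⟫ := by
        rw [← mul_apply_eq_comp C, hswap, mul_apply_eq_comp, mul_apply_eq_comp, inner_star_right]
    _ = 0 := by
        rcases hA'.star_mul_eq_one_or_eq_zero hA with h' | h'
        · rw [h', one_apply_eq_self, h.2 r hr C' hC']
        · rw [h', zero_apply, inner_zero_right]

theorem invariantUnder_generator_wanderingSpan (hM : InvariantUnder ρ.generator M) (k l : ℕ) :
    InvariantUnder ρ.generator (wanderingSpan (ρ.rowKL k l) M) :=
  invariantUnder_wanderingSpan hM fun g _ hζ ↦ (ρ.hasDegree_generator g).isWandering_apply hζ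

theorem invariantUnder_rowKL (hM : InvariantUnder ρ.generator M) (k l : ℕ) :
    InvariantUnder (ρ.rowKL k l) M :=
  fun a _ hx ↦ (ρ.hasDegree_rowKL k l a).apply_mem hM hx

theorem invariantUnder_star_rowKL (hM : InvariantUnder (star ρ.generator) M) (k l : ℕ) :
    InvariantUnder (star (ρ.rowKL k l)) M :=
  fun a _ hx ↦ (ρ.hasDegree_rowKL k l a).star_apply_mem hM hx

theorem generatorDegree_le (hk : 0 < k) (hl : 0 < l) :
    ∀ g : Fin m ⊕ Fin n, generatorDegree g ≤ (k, l)
  | .inl _ => ⟨hk, Nat.zero_le l⟩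
  | .inr _ => ⟨Nat.zero_le k, hl⟩

theorem invariantUnder_star_generator_inf_orthogonal_wanderingSpan (hk : 0 < k) (hl : 0 < l)
    (hsum : ∑ a, ρ.rowKL k l a * star (ρ.rowKL k l a) = 1) (hMc : IsClosed (M : Set H))
    (hM : InvariantUnder ρ.generator M) :
    InvariantUnder (star ρ.generator) (M ⊓ (wanderingSpan (ρ.rowKL k l) M)ᗮ) := by
  intro g x hx
  refine ⟨?_, (invariantUnder_generator_wanderingSpan hM k l).orthogonal g x hx.2⟩
  rw [← sum_apply_star_apply hsum x, map_sum]
  refine M.sum_mem fun a _ ↦ ?_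
  have hmem : star (ρ.rowKL k l a) x ∈ M :=
    ((ρ.isRowIsometry_rowKL k l).invariantUnder_star_inf_orthogonal_wanderingSpan hMc
      (invariantUnder_rowKL hM k l) a x hx).1
  obtain ⟨e, he⟩ := le_iff_exists_add.1 (generatorDegree_le hk hl g)
  obtain ⟨B, C, hB, hC, hBC⟩ := (he ▸ ρ.hasDegree_rowKL k l a).exists_eq_mul
  rw [congr($hBC _), mul_apply_eq_comp, Pi.star_apply]
  exact (ρ.hasDegree_generator g).star_apply_apply_mem hB (hC.apply_mem hM hmem)

theorem invariantUnder_star_generator_of_forall_not_isWandering (hk : 0 < k) (hl : 0 < l)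
    (hsum : ∑ a, ρ.rowKL k l a * star (ρ.rowKL k l a) = 1) (hMc : IsClosed (M : Set H))
    (hM : InvariantUnder ρ.generator M) (h : ∀ ζ ∈ M, ¬ IsWandering (ρ.rowKL k l) ζ) :
    InvariantUnder (star ρ.generator) M := by
  simpa [wanderingSpan_eq_bot h] using
    invariantUnder_star_generator_inf_orthogonal_wanderingSpan hk hl hsum hMc hM

theorem CuntzType.le_of_forall_apply_mem (hC : ρ.CuntzType) {N : Submodule ℂ H}
    (hM : InvariantUnder (star ρ.generator) M) (g : Fin m ⊕ Fin n)
    (hN : ∀ B, ρ.HasDegree (generatorDegree g) B → ∀ x ∈ M, B x ∈ N) : M ≤ N := by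
  intro x hx
  cases g with
  | inl =>
    rw [← sum_apply_star_apply hC.1 x]
    exact N.sum_mem fun i _ ↦ hN _ (ρ.hasDegree_generator (.inl i)) _ (hM (.inl i) x hx)
  | inr =>
    rw [← sum_apply_star_apply hC.2 x]
    exact N.sum_mem fun j _ ↦ hN _ (ρ.hasDegree_generator (.inr j)) _ (hM (.inr j) x hx)

/-- The linear span of the vectors `S_u T_v x` with `x ∈ M`: the smallest subspace containing `M`
and invariant under the generators. -/
def invariantHull (ρ : TwoGraphRep m n θ H) (M : Submodule ℂ H) : Submodule ℂ H :=
  Submodule.span ℂ {y | ∃ d A, ρ.HasDegree d A ∧ ∃ x ∈ M, A x = y}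

theorem HasDegree.apply_mem_invariantHull (hA : ρ.HasDegree d A) {x : H} (hx : x ∈ M) :
    A x ∈ ρ.invariantHull M :=
  Submodule.subset_span ⟨d, A, hA, x, hx, rfl⟩

theorem invariantHull_le {N : Submodule ℂ H} (hN : InvariantUnder ρ.generator N) (h : M ≤ N) :
    ρ.invariantHull M ≤ N :=
  Submodule.span_le.2 fun _ ⟨_, _, hA, _, hx, hy⟩ ↦ hy ▸ hA.apply_mem hN (h hx)

theorem CuntzType.invariantUnder_star_invariantHull (hC : ρ.CuntzType)
    (hM : InvariantUnder (star ρ.generator) M) :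
    InvariantUnder (star ρ.generator) (ρ.invariantHull M) := by
  intro g
  suffices h : ρ.invariantHull M ≤
      (ρ.invariantHull M).comap (star (ρ.generator g)).toLinearMap from fun x hx ↦ h hx
  refine Submodule.span_le.2 ?_
  rintro _ ⟨d, A, hA, x, hx, rfl⟩
  suffices h : M ≤ (ρ.invariantHull M).comap (star (ρ.generator g) * A).toLinearMap from h hx
  refine hC.le_of_forall_apply_mem hM g fun B hB y hy ↦ ?_
  have hAB : ρ.HasDegree (generatorDegree g + d) (A * B) := add_comm d _ ▸ hA.mul hB
  obtain ⟨B', A', hB', hA', hswap⟩ := hAB.exists_eq_mul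
  have hy' : star (ρ.generator g) (B' (A' y)) ∈ ρ.invariantHull M :=
    (ρ.hasDegree_generator g).star_apply_apply_mem hB' (hA'.apply_mem_invariantHull hy)
  rwa [← mul_apply_eq_comp B', ← hswap] at hy'

theorem CuntzType.invariantUnder_coinvariantCore (hC : ρ.CuntzType)
    (hM : InvariantUnder ρ.generator M) :
    InvariantUnder ρ.generator (coinvariantCore ρ.generator M) := fun g _ hx ↦
  (hC.invariantUnder_star_invariantHull invariantUnder_star_coinvariantCore).le_coinvariantCore
    (invariantHull_le hM coinvariantCore_le)
    ((ρ.hasDegree_generator g).apply_mem_invariantHull hx)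

theorem le_wanderingSpan_rowKL (hp : 0 < p) (hq : 0 < q)
    (hsum : ∑ a, ρ.rowKL p q a * star (ρ.rowKL p q a) = 1) (hkl : IsDilationType (ρ.rowKL k l))
    (hMc : IsClosed (M : Set H)) (hM : InvariantUnder ρ.generator M)
    (hM' : InvariantUnder (star ρ.generator) M) (hno : ∀ ζ ∈ M, ¬ IsWandering (ρ.rowKL p q) ζ)
    {η : H} (hη : IsWandering (ρ.rowKL k l) η) : M ≤ wanderingSpan (ρ.rowKL k l) ⊤ := by
  set Q := M ⊓ wanderingSpan (ρ.rowKL k l) ⊤ with hQ_def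
  have hQc : IsClosed (Q : Set H) := hMc.inter (isClosed_wanderingSpan _ _)
  have hQ : InvariantUnder ρ.generator Q := hM.inf (invariantUnder_generator_wanderingSpan .top k l)
  have hQ' : InvariantUnder (star ρ.generator) Q :=
    invariantUnder_star_generator_of_forall_not_isWandering hp hq hsum hQc hQ fun ζ hζ ↦ hno ζ hζ.1
  have hbot : M ⊓ Qᗮ = ⊥ :=
    hkl.eq_bot_of_inf_wanderingSpan_eq_bot (ρ.isRowIsometry_rowKL k l)
      (hMc.inter (Submodule.isClosed_orthogonal _))
      (invariantUnder_rowKL (hM.inf hQ'.orthogonal_of_star) k l)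
      (invariantUnder_star_rowKL (hM'.inf hQ.orthogonal) k l) hη
      (by rw [inf_right_comm, ← hQ_def, Q.inf_orthogonal_eq_bot])
  have : CompleteSpace Q := hQc.completeSpace_coe
  have hsup := Submodule.sup_orthogonal_inf_of_hasOrthogonalProjection (inf_le_left : Q ≤ M)
  rw [inf_comm Qᗮ, hbot, sup_bot_eq] at hsup
  exact hsup.ge.trans inf_le_right

theorem CuntzType.wanderingSpan_rowKL_le (hC : ρ.CuntzType) (hk : 0 < k) (hl : 0 < l)
    (hp : 0 < p) (hq : 0 < q) (hkl : IsDilationType (ρ.rowKL k l))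
    (hpq : IsDilationType (ρ.rowKL p q)) :
    wanderingSpan (ρ.rowKL p q) ⊤ ≤ wanderingSpan (ρ.rowKL k l) ⊤ := by
  set L := wanderingSpan (ρ.rowKL p q) ⊤
  set K := coinvariantCore ρ.generator L
  have hLc : IsClosed (L : Set H) := isClosed_wanderingSpan _ _
  have hL : InvariantUnder ρ.generator L := invariantUnder_generator_wanderingSpan .top p q
  have hKc : IsClosed (K : Set H) := isClosed_coinvariantCore hLc
  have hK : InvariantUnder ρ.generator K := hC.invariantUnder_coinvariantCore hL
  have hK' : InvariantUnder (star ρ.generator) K := invariantUnder_star_coinvariantCore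
  have hno (ζ : H) (hζ : ζ ∈ K) : ¬ IsWandering (ρ.rowKL p q) ζ :=
    hpq.not_isWandering (ρ.isRowIsometry_rowKL p q) hKc (invariantUnder_rowKL hK p q)
      (invariantUnder_star_rowKL hK' p q) coinvariantCore_le hζ
  set R := wanderingSpan (ρ.rowKL k l) L
  have hRK : L ⊓ Rᗮ ≤ K :=
    (invariantUnder_star_generator_inf_orthogonal_wanderingSpan hk hl hkl.1 hLc
      hL).le_coinvariantCore inf_le_left
  by_cases hex : ∃ η, IsWandering (ρ.rowKL k l) η
  · obtain ⟨η, hη⟩ := hex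
    have : CompleteSpace R := (isClosed_wanderingSpan _ _).completeSpace_coe
    rw [← Submodule.sup_orthogonal_inf_of_hasOrthogonalProjection (wanderingSpan_le hLc : R ≤ L),
      inf_comm]
    exact sup_le (wanderingSpan_mono le_top)
      (hRK.trans (le_wanderingSpan_rowKL hp hq hpq.1 hkl hKc hK hK' hno hη))
  · have hR : R = ⊥ := wanderingSpan_eq_bot fun ζ _ hζ ↦ hex ⟨ζ, hζ⟩
    rw [hR, Submodule.bot_orthogonal_eq_top, inf_top_eq] at hRK
    exact (wanderingSpan_le_iff (isClosed_wanderingSpan _ _)).2 fun ζ hζ h ↦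
      (hno ζ (hRK (h.mem_wanderingSpan hζ)) h).elim

theorem structSpaceKL_eq_orthogonal_wanderingSpan (ρ : TwoGraphRep m n θ H) (hk : 0 < k) (l : ℕ) :
    ρ.structSpaceKL k l = (wanderingSpan (ρ.rowKL k l) ⊤)ᗮ := by
  simp [structSpaceKL, wanderingSpan, isWanderingKL_iff hk]

theorem CuntzType.structSpaceKL_eq (hC : ρ.CuntzType) (hk : 0 < k) (hl : 0 < l) (hp : 0 < p)
    (hq : 0 < q) (hkl : IsDilationType (ρ.rowKL k l)) (hpq : IsDilationType (ρ.rowKL p q)) :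
    ρ.structSpaceKL k l = ρ.structSpaceKL p q := by
  rw [ρ.structSpaceKL_eq_orthogonal_wanderingSpan hk,
    ρ.structSpaceKL_eq_orthogonal_wanderingSpan hp,
    (hC.wanderingSpan_rowKL_le hp hq hk hl hpq hkl).antisymm
      (hC.wanderingSpan_rowKL_le hk hl hp hq hkl hpq)]

end TwoGraphRep

/-- If all the row-isometries `[S_u T_v : |u|=k, |v|=l]` (k,l>0) are of dilation type, then all
their structure projections coincide, and equal the first structure projection of `𝔖`. -/
theorem statement1 {m n : ℕ} (hm : 0 < m) (hn : 0 < n) (hmn : 2 ≤ m ∨ 2 ≤ n)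
    {θ : Equiv.Perm (Fin m × Fin n)} {H : Type*}
    [NormedAddCommGroup H] [InnerProductSpace ℂ H] [CompleteSpace H]
    (ρ : TwoGraphRep m n θ H) (hCuntz : ρ.CuntzType)
    (hdil : ∀ k l : ℕ, 0 < k → 0 < l → IsDilationType (ρ.rowKL k l)) :
    (∀ k l p q : ℕ, 0 < k → 0 < l → 0 < p → 0 < q →
      ρ.structSpaceKL k l = ρ.structSpaceKL p q) ∧
    (∀ k l : ℕ, 0 < k → 0 < l → ρ.structSpaceKL k l = ρ.firstStructSpace) := by
  have heq : ∀ k l p q : ℕ, 0 < k → 0 < l → 0 < p → 0 < q →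
      ρ.structSpaceKL k l = ρ.structSpaceKL p q := fun k l p q hk hl hp hq ↦
    hCuntz.structSpaceKL_eq hk hl hp hq (hdil k l hk hl) (hdil p q hp hq)
  refine ⟨heq, fun k l hk hl ↦ le_antisymm ?_ ?_⟩
  · exact le_iInf₂ fun p q ↦ le_iInf₂ fun hp hq ↦ (heq k l p q hk hl hp hq).le
  · exact iInf₂_le_of_le k l (iInf₂_le_of_le hk hl le_rfl)
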